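/- Let K be a finite field with 64 elements, let k ⊆ K be its unique subfield with 4 elements, and let x ∈ K with x ∉ k. Then the set of matrices A ∈ GL₂(k), counted up to multiplication by nonzero scalars of k, whose fractional linear transformation maps the three-element set {x, x⁴, x¹⁶} into itself, has exactly 3 elements. (That is, the stabilizer in PGL₂(k) of the Frobenius orbit of x has cardinality 3.) -/

import Mathlib

/-!
Every element of `k` is fixed by `φ : t ↦ t ^ 4`, and conversely since `X ^ 4 - X` has at most four
roots. Hence `x ∉ k` has three distinct conjugates `x, x ^ 4, x ^ 16`, and `1, x, x ^ 2` are
linearly independent over `k` (`quad_coeffs_eq_zero`).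

A Möbius map with coefficients in `k` commutes with `φ`, so it preserves the orbit of `x` as soon
as it sends `x` into the orbit (`moebius_maps_orbit`). So it is enough to see that for each `y` in
the orbit exactly one scalar class of matrices sends `x` to `y`.

* Existence (`exists_moebius`): `[K : k] = 3`, so `1, x, y, x * y` satisfy a nontrivial linear
  relation over `k`, and this relation reads `a * x + b = y * (c * x + d)`.
* Uniqueness (`eq_smul_of_moebius_eq`): if two matrices send `x` to the same point, clearing
  denominators gives a relation of degree at most two for `x` over `k`; its three coefficients
  vanish, which makes the matrices proportional.

The scalar classes are therefore in bijection with the three points of the orbit.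
-/

section Helpers

variable {K : Type*} [Field K]

theorem two_eq_zero_of_card (hK : Nat.card K = 64) : (2 : K) = 0 := by
  have : Finite K := Nat.finite_of_card_ne_zero (by omega)
  have := Fintype.ofFinite K
  have h := Nat.cast_card_eq_zero K
  rw [← Nat.card_eq_fintype_card, hK] at h
  have h2 : (2 : K) ^ 6 = 0 := by
    rw [← h]
    norm_num
  exact pow_eq_zero_iff (by norm_num) |>.1 h2

theorem pow_card_eq (hK : Nat.card K = 64) (t : K) : t ^ 64 = t := by
  have : Finite K := Nat.finite_of_card_ne_zero (by omega)
  have := Fintype.ofFinite K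
  have h := FiniteField.pow_card t
  rwa [← Nat.card_eq_fintype_card, hK] at h

theorem pow_four_eq (k : Subfield K) (hk : Nat.card k = 4) {t : K} (ht : t ∈ k) : t ^ 4 = t := by
  have : Finite k := Nat.finite_of_card_ne_zero (by omega)
  have := Fintype.ofFinite k
  have h := FiniteField.pow_card (⟨t, ht⟩ : k)
  rw [← Nat.card_eq_fintype_card, hk] at h
  exact congrArg Subtype.val h

open Polynomial in
theorem mem_of_pow_four (k : Subfield K) (hk : Nat.card k = 4) {t : K} (ht : t ^ 4 = t) :
    t ∈ k := by
  classical
  by_contra hn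
  have hfin : (k : Set K).Finite :=
    Set.finite_coe_iff.1 (Nat.finite_of_card_ne_zero (α := k) (by omega))
  have hcard : hfin.toFinset.card = 4 := by
    rw [← Set.ncard_eq_toFinset_card _ hfin]
    exact hk
  -- Otherwise `k ∪ {t}` would consist of five roots of `X ^ 4 - X`.
  have hle := card_le_degree_of_subset_roots (p := (X ^ 4 - X : K[X]))
    (Z := insert t hfin.toFinset) (by
      intro s hs
      rw [mem_roots (FiniteField.X_pow_card_sub_X_ne_zero K (by norm_num))]
      have hs' : s ∈ insert t hfin.toFinset := hs
      have h4 : s ^ 4 = s := by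
        rcases Finset.mem_insert.1 hs' with rfl | h
        · exact ht
        · exact pow_four_eq k hk (by simpa using h)
      simp [h4])
  rw [FiniteField.X_pow_card_sub_X_natDegree_eq K (by norm_num),
    Finset.card_insert_of_notMem (by simpa using hn), hcard] at hle
  omega

theorem add_pow_four (h2 : (2 : K) = 0) (a b : K) : (a + b) ^ 4 = a ^ 4 + b ^ 4 := by
  linear_combination (2 * a ^ 3 * b + 3 * a ^ 2 * b ^ 2 + 2 * a * b ^ 3) * h2

theorem conjugates_ne (hK : Nat.card K = 64) (k : Subfield K) (hk : Nat.card k = 4)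
    {x : K} (hx : x ∉ k) : x ≠ x ^ 4 ∧ x ≠ x ^ 16 ∧ x ^ 4 ≠ x ^ 16 := by
  have h64 := pow_card_eq hK x
  have h1 : x ^ 4 ≠ x := fun h => hx (mem_of_pow_four k hk h)
  refine ⟨h1.symm, fun h => h1 ?_, fun h => h1 ?_⟩
  · calc x ^ 4 = (x ^ 16) ^ 4 := by rw [← h]
      _ = x := by rw [← pow_mul]; exact h64
  · have h16 : x ^ 16 = x := by
      calc x ^ 16 = (x ^ 4) ^ 4 := by ring
        _ = (x ^ 16) ^ 4 := by rw [h]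
        _ = x := by rw [← pow_mul]; exact h64
    rw [h, h16]

/-- `1, x, x ^ 2` are linearly independent over `k`: a quadratic polynomial over `k` vanishing at
`x` also vanishes at the other two conjugates of `x`. -/
theorem quad_coeffs_eq_zero (hK : Nat.card K = 64) (k : Subfield K) (hk : Nat.card k = 4)
    {x : K} (hx : x ∉ k) {p q r : K} (hp : p ∈ k) (hq : q ∈ k) (hr : r ∈ k)
    (h : p * x ^ 2 + q * x + r = 0) : p = 0 ∧ q = 0 ∧ r = 0 := by
  have h2 := two_eq_zero_of_card hK
  obtain ⟨n1, n2, n3⟩ := conjugates_ne hK k hk hx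
  have conj : ∀ t : K, p * t ^ 2 + q * t + r = 0 →
      p * (t ^ 4) ^ 2 + q * t ^ 4 + r = 0 := by
    intro t ht
    have h4 : (p * t ^ 2 + q * t + r) ^ 4 = 0 := by rw [ht]; norm_num
    rw [add_pow_four h2, add_pow_four h2, mul_pow, mul_pow, pow_four_eq k hk hp,
      pow_four_eq k hk hq, pow_four_eq k hk hr] at h4
    linear_combination h4
  have hy := conj x h
  have hz := conj _ hy
  rw [← pow_mul x 4 4] at hz
  norm_num only at hz
  generalize x ^ 4 = y at *
  generalize x ^ 16 = z at *
  have e1 : p * (x + y) + q = 0 :=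
    (mul_eq_zero.1 (by linear_combination h - hy :
      (x - y) * (p * (x + y) + q) = 0)).resolve_left (sub_ne_zero.2 n1)
  have e2 : p * (x + z) + q = 0 :=
    (mul_eq_zero.1 (by linear_combination h - hz :
      (x - z) * (p * (x + z) + q) = 0)).resolve_left (sub_ne_zero.2 n2)
  have hp0 : p = 0 :=
    (mul_eq_zero.1 (by linear_combination e1 - e2 :
      (y - z) * p = 0)).resolve_left (sub_ne_zero.2 n3)
  subst hp0
  have hq0 : q = 0 := by linear_combination e1
  subst hq0
  exact ⟨rfl, rfl, by linear_combination h⟩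

theorem denom_ne_zero (hK : Nat.card K = 64) (k : Subfield K) (hk : Nat.card k = 4)
    {x : K} (hx : x ∉ k) {A : Matrix (Fin 2) (Fin 2) K} (hA : ∀ i j, A i j ∈ k)
    (hdet : A.det ≠ 0) : A 1 0 * x + A 1 1 ≠ 0 := by
  intro h
  obtain ⟨-, h1, h2⟩ := quad_coeffs_eq_zero hK k hk hx k.zero_mem (hA 1 0) (hA 1 1)
    (by linear_combination h)
  apply hdet
  rw [Matrix.det_fin_two, h1, h2]
  ring

/-- A Möbius map over `k` commutes with `t ↦ t ^ 4`, so it preserves the orbit of `x` once it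
sends `x` into that orbit. -/
theorem moebius_maps_orbit (hK : Nat.card K = 64) (k : Subfield K) (hk : Nat.card k = 4)
    {x : K} {A : Matrix (Fin 2) (Fin 2) K} (hA : ∀ i j, A i j ∈ k)
    (h : (A 0 0 * x + A 0 1) / (A 1 0 * x + A 1 1) ∈ ({x, x ^ 4, x ^ 16} : Set K)) :
    ∀ t ∈ ({x, x ^ 4, x ^ 16} : Set K),
      (A 0 0 * t + A 0 1) / (A 1 0 * t + A 1 1) ∈ ({x, x ^ 4, x ^ 16} : Set K) := by
  have h2 := two_eq_zero_of_card hK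
  have conj : ∀ t : K, (A 0 0 * t ^ 4 + A 0 1) / (A 1 0 * t ^ 4 + A 1 1) =
      ((A 0 0 * t + A 0 1) / (A 1 0 * t + A 1 1)) ^ 4 := by
    intro t
    rw [div_pow, add_pow_four h2, add_pow_four h2, mul_pow, mul_pow]
    simp only [fun i j => pow_four_eq k hk (hA i j)]
  have stable : ∀ s ∈ ({x, x ^ 4, x ^ 16} : Set K), s ^ 4 ∈ ({x, x ^ 4, x ^ 16} : Set K) := by
    rintro s (rfl | rfl | rfl)
    · exact Or.inr (Or.inl rfl)
    · exact Or.inr (Or.inr (by rw [← pow_mul]; rfl))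
    · exact Or.inl (by rw [← pow_mul]; exact pow_card_eq hK x)
  have h4 := stable _ h
  rw [← conj] at h4
  have h16 := stable _ h4
  rw [← conj, ← pow_mul] at h16
  rintro t (rfl | rfl | rfl)
  · exact h
  · exact h4
  · exact h16

theorem finrank_eq_three (hK : Nat.card K = 64) (k : Subfield K) (hk : Nat.card k = 4) :
    Module.finrank k K = 3 := by
  have : Finite K := Nat.finite_of_card_ne_zero (by omega)
  have := Fintype.ofFinite K
  have := Fintype.ofFinite k
  have h := Module.card_eq_pow_finrank (K := k) (V := K)
  rw [← Nat.card_eq_fintype_card, ← Nat.card_eq_fintype_card, hK, hk] at h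
  exact Nat.pow_right_injective (by norm_num : 2 ≤ 4)
    (h.symm.trans (by norm_num : 64 = 4 ^ 3))

theorem exists_moebius (hK : Nat.card K = 64) (k : Subfield K) (hk : Nat.card k = 4)
    {x y : K} (hx : x ∉ k) (hy : y ∉ k) :
    ∃ A : Matrix (Fin 2) (Fin 2) K, (∀ i j, A i j ∈ k) ∧ A.det ≠ 0 ∧
      (A 0 0 * x + A 0 1) / (A 1 0 * x + A 1 1) = y := by
  have : Finite K := Nat.finite_of_card_ne_zero (by omega)
  have hdep : ¬ LinearIndependent k ![x, 1, x * y, y] := by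
    intro hli
    have := hli.fintype_card_le_finrank
    rw [finrank_eq_three hK k hk] at this
    simp at this
  obtain ⟨g, hg, i, hi⟩ := Fintype.not_linearIndependent_iff.1 hdep
  simp only [Fin.sum_univ_four, Subfield.smul_def, smul_eq_mul, Matrix.cons_val] at hg
  obtain ⟨a, ha⟩ : ∃ a, a = g 0 := ⟨_, rfl⟩
  obtain ⟨b, hb⟩ : ∃ a, a = g 1 := ⟨_, rfl⟩
  obtain ⟨c, hc⟩ : ∃ a, a = g 2 := ⟨_, rfl⟩
  obtain ⟨d, hd⟩ : ∃ a, a = g 3 := ⟨_, rfl⟩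
  rw [← ha, ← hb, ← hc, ← hd] at hg
  have hne : ¬ (a = 0 ∧ b = 0 ∧ c = 0 ∧ d = 0) := by
    rintro ⟨rfl, rfl, rfl, rfl⟩
    apply hi
    fin_cases i
    exacts [ha.symm, hb.symm, hc.symm, hd.symm]
  have lin : ∀ p q : k, (p : K) * x + q = 0 → p = 0 ∧ q = 0 := by
    intro p q h
    obtain ⟨-, h1, h2⟩ := quad_coeffs_eq_zero hK k hk hx k.zero_mem p.2 q.2
      (by linear_combination h)
    exact ⟨Subtype.ext h1, Subtype.ext h2⟩
  have hden : (c : K) * x + d ≠ 0 := by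
    intro h
    obtain ⟨rfl, rfl⟩ := lin c d h
    obtain ⟨rfl, rfl⟩ := lin a b (by linear_combination hg - y * h)
    exact hne ⟨rfl, rfl, rfl, rfl⟩
  have hrel : (a : K) * x + b = (-y) * (c * x + d) := by linear_combination hg
  have hdet : (a : K) * d - b * c ≠ 0 := by
    intro h0
    -- A singular matrix would make the quotient constant, with value in `k`.
    apply hy
    by_cases hc0 : (c : K) = 0
    · have hd0 : (d : K) ≠ 0 := fun h => hden (by rw [hc0, h]; ring)
      have e : y = -(a * x + b) / d := by
        rw [hrel, hc0]
        field_simp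
        ring
      have ha0 : (a : K) = 0 := by
        rw [hc0] at h0
        exact (mul_eq_zero.1 (by linear_combination h0 : (a : K) * d = 0)).resolve_right hd0
      rw [e, ha0, zero_mul, zero_add]
      exact k.div_mem (k.neg_mem b.2) d.2
    · have e : y = -a / c := by
        rw [eq_div_iff hc0]
        refine mul_right_cancel₀ hden ?_
        linear_combination (c : K) * hrel + h0
      rw [e]
      exact k.div_mem (k.neg_mem a.2) c.2
  refine ⟨!![-a, -b; c, d], ?_, ?_, ?_⟩
  · intro i j
    fin_cases i <;> fin_cases j
    exacts [k.neg_mem a.2, k.neg_mem b.2, c.2, d.2]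
  · rw [Matrix.det_fin_two_of]
    intro h
    exact hdet (by linear_combination -h)
  · simp only [Matrix.of_apply, Matrix.cons_val]
    rw [div_eq_iff hden]
    linear_combination -hrel

theorem eq_smul_of_moebius_eq (hK : Nat.card K = 64) (k : Subfield K) (hk : Nat.card k = 4)
    {x : K} (hx : x ∉ k) {A B : Matrix (Fin 2) (Fin 2) K}
    (hA : ∀ i j, A i j ∈ k) (hdA : A.det ≠ 0) (hB : ∀ i j, B i j ∈ k) (hdB : B.det ≠ 0)
    (h : (A 0 0 * x + A 0 1) / (A 1 0 * x + A 1 1) =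
      (B 0 0 * x + B 0 1) / (B 1 0 * x + B 1 1)) :
    ∃ e ∈ k, e ≠ 0 ∧ B = e • A := by
  rw [div_eq_div_iff (denom_ne_zero hK k hk hx hA hdA) (denom_ne_zero hK k hk hx hB hdB)] at h
  obtain ⟨e1, e2, e3⟩ := quad_coeffs_eq_zero hK k hk hx
    (p := A 0 0 * B 1 0 - B 0 0 * A 1 0)
    (q := A 0 0 * B 1 1 + A 0 1 * B 1 0 - B 0 0 * A 1 1 - B 0 1 * A 1 0)
    (r := A 0 1 * B 1 1 - B 0 1 * A 1 1)
    (k.sub_mem (k.mul_mem (hA _ _) (hB _ _)) (k.mul_mem (hB _ _) (hA _ _)))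
    (k.sub_mem (k.sub_mem (k.add_mem (k.mul_mem (hA _ _) (hB _ _)) (k.mul_mem (hA _ _) (hB _ _)))
      (k.mul_mem (hB _ _) (hA _ _))) (k.mul_mem (hB _ _) (hA _ _)))
    (k.sub_mem (k.mul_mem (hA _ _) (hB _ _)) (k.mul_mem (hB _ _) (hA _ _)))
    (by linear_combination h)
  have hd := hdA
  rw [Matrix.det_fin_two] at hd
  -- The scalar is the upper left entry of `A⁻¹ * B`.
  obtain ⟨e, he⟩ : ∃ e, e = (A 1 1 * B 0 0 - A 0 1 * B 1 0) /
    (A 0 0 * A 1 1 - A 0 1 * A 1 0) := ⟨_, rfl⟩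
  have hek : e ∈ k := by
    rw [he]
    exact k.div_mem (k.sub_mem (k.mul_mem (hA _ _) (hB _ _)) (k.mul_mem (hA _ _) (hB _ _)))
      (k.sub_mem (k.mul_mem (hA _ _) (hA _ _)) (k.mul_mem (hA _ _) (hA _ _)))
  rw [eq_div_iff hd] at he
  have hBe : B = e • A := by
    ext i j
    rw [Matrix.smul_apply, smul_eq_mul]
    refine mul_right_cancel₀ hd ?_
    fin_cases i <;> fin_cases j <;> simp only [Fin.zero_eta, Fin.mk_one, Fin.isValue]
    · linear_combination (-A 0 0) * he + A 0 1 * e1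
    · linear_combination (-A 0 1) * he + A 0 1 * e2 - A 0 0 * e3
    · linear_combination (-A 1 0) * he + A 1 1 * e1
    · linear_combination (-A 1 1) * he + A 1 1 * e2 - A 1 0 * e3
  refine ⟨e, hek, ?_, hBe⟩
  rintro rfl
  apply hdB
  rw [hBe]
  simp

end Helpers


/-- Let `K` be the field with 64 elements, `k ⊆ K` its subfield with 4
elements, and `x ∈ K ∖ k`. The set of invertible 2×2 matrices with entries in `k` whose
fractional linear transformation maps `{x, x⁴, x¹⁶}` into itself, counted up to multiplication
by nonzero scalars of `k` (i.e. the number of scalar classes of such matrices), has exactly 3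
elements: the stabilizer in `PGL₂(k)` of the Frobenius orbit of `x` has cardinality 3. -/
theorem stmt_11 (K : Type*) [Field K] (hK : Nat.card K = 64)
    (k : Subfield K) (hk : Nat.card k = 4)
    (x : K) (hx : x ∉ k) :
    Set.ncard {O : Set (Matrix (Fin 2) (Fin 2) K) |
      ∃ A : Matrix (Fin 2) (Fin 2) K,
        ((∀ i j, A i j ∈ k) ∧ A.det ≠ 0 ∧
          ∀ t ∈ ({x, x ^ 4, x ^ 16} : Set K),
            (A 0 0 * t + A 0 1) / (A 1 0 * t + A 1 1) ∈ ({x, x ^ 4, x ^ 16} : Set K)) ∧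
        O = {B | ∃ c : K, c ∈ k ∧ c ≠ 0 ∧ B = c • A}} = 3 := by
  obtain ⟨n1, n2, n3⟩ := conjugates_ne hK k hk hx
  have orbit_notMem : ∀ t ∈ ({x, x ^ 4, x ^ 16} : Set K), t ∉ k := by
    have h64 := pow_card_eq hK x
    rintro t (rfl | rfl | rfl) ht
    · exact hx ht
    · exact n3 ((pow_four_eq k hk ht).symm.trans (by ring))
    · exact n2 (by rw [← pow_four_eq k hk ht, ← pow_mul]
                   exact h64.symm)
  have hex : ∀ t : K, ∃ A : Matrix (Fin 2) (Fin 2) K, t ∈ ({x, x ^ 4, x ^ 16} : Set K) →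
      (∀ i j, A i j ∈ k) ∧ A.det ≠ 0 ∧ (A 0 0 * x + A 0 1) / (A 1 0 * x + A 1 1) = t := by
    intro t
    by_cases ht : t ∈ ({x, x ^ 4, x ^ 16} : Set K)
    · obtain ⟨A, hA⟩ := exists_moebius hK k hk hx (orbit_notMem t ht)
      exact ⟨A, fun _ => hA⟩
    · exact ⟨0, fun h => absurd h ht⟩
  choose M hM using hex
  have hcard : ({x, x ^ 4, x ^ 16} : Set K).ncard = 3 :=
    Set.ncard_eq_three.2 ⟨_, _, _, n1, n2, n3, rfl⟩
  have hinj : Set.InjOn (fun t => {B | ∃ c : K, c ∈ k ∧ c ≠ 0 ∧ B = c • M t})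
      ({x, x ^ 4, x ^ 16} : Set K) := by
    intro t ht s hs hts
    have hmem : M t ∈ {B | ∃ c : K, c ∈ k ∧ c ≠ 0 ∧ B = c • M s} := by
      have hts' : {B | ∃ c : K, c ∈ k ∧ c ≠ 0 ∧ B = c • M t} =
        {B | ∃ c : K, c ∈ k ∧ c ≠ 0 ∧ B = c • M s} := hts
      rw [← hts']
      exact ⟨1, k.one_mem, one_ne_zero, (one_smul _ _).symm⟩
    obtain ⟨c, -, hc, h⟩ := hmem
    rw [← (hM t ht).2.2, ← (hM s hs).2.2, h]
    simp only [Matrix.smul_apply, smul_eq_mul, mul_assoc, ← mul_add]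
    exact mul_div_mul_left _ _ hc
  rw [← hcard, ← hinj.ncard_image]
  congr 1
  ext O
  constructor
  · rintro ⟨A, ⟨hA, hdA, hmap⟩, rfl⟩
    have ht := hmap x (Or.inl rfl)
    refine ⟨_, ht, ?_⟩
    change {B | ∃ c : K, c ∈ k ∧ c ≠ 0 ∧ B = c • M _} = _
    obtain ⟨h1, h2, h3⟩ := hM _ ht
    obtain ⟨e, he, he0, hAe⟩ := eq_smul_of_moebius_eq hK k hk hx h1 h2 hA hdA h3
    generalize M ((A 0 0 * x + A 0 1) / (A 1 0 * x + A 1 1)) = N at hAe ⊢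
    ext B
    constructor
    · rintro ⟨c, hc, hc0, rfl⟩
      refine ⟨c / e, k.div_mem hc he, div_ne_zero hc0 he0, ?_⟩
      rw [hAe, smul_smul, div_mul_cancel₀ _ he0]
    · rintro ⟨c, hc, hc0, rfl⟩
      exact ⟨c * e, k.mul_mem hc he, mul_ne_zero hc0 he0, by rw [hAe, smul_smul]⟩
  · rintro ⟨t, ht, rfl⟩
    obtain ⟨h1, h2, h3⟩ := hM t ht
    refine ⟨M t, ⟨h1, h2, moebius_maps_orbit hK k hk h1 ?_⟩, rfl⟩
    rw [h3]
    exact ht
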